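/- Let γ > 0 and let u be a periodic classical solution of the Ostrovsky–Hunter equation on [0,T) with initial data u₀ satisfying ∫₀¹ u₀(x) dx = 0. Then for every t ∈ [0,T), sup_{s ∈ [0,t]} sup_{x ∈ ℝ} |u(s,x)| ≤ ‖u₀‖_{L∞} + γ t ‖u₀‖_{L²}. -/

import Mathlib

open MeasureTheory Filter Set intervalIntegral

/-- A periodic (period `1` in `x`) classical solution of the Ostrovsky–Hunter
equation `(u_t + u u_x)_x = γ u` on the set `S` of times (typically `[0,T)`):
`u` is `1`-periodic in `x`, continuously differentiable in `t`, twice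
continuously differentiable in `x`, with `u_tx` continuous, and the expanded
equation `u_tx + u_x² + u u_xx = γ u` holds pointwise at positive times of `S`. -/
structure IsPeriodicOHSolution (γ : ℝ) (S : Set ℝ) (u : ℝ → ℝ → ℝ) : Prop where
  periodic : ∀ t ∈ S, ∀ x : ℝ, u t (x + 1) = u t x
  diff_t : ∀ t ∈ S, ∀ x : ℝ, DifferentiableAt ℝ (fun s => u s x) t
  diff_x : ∀ t ∈ S, ∀ x : ℝ, DifferentiableAt ℝ (u t) x
  diff_xx : ∀ t ∈ S, ∀ x : ℝ, DifferentiableAt ℝ (deriv (u t)) x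
  diff_tx : ∀ t ∈ S, ∀ x : ℝ, DifferentiableAt ℝ (fun y => deriv (fun s => u s y) t) x
  cont_u : ContinuousOn (fun p : ℝ × ℝ => u p.1 p.2) (S ×ˢ (Set.univ : Set ℝ))
  cont_ut : ContinuousOn (fun p : ℝ × ℝ => deriv (fun s => u s p.2) p.1)
      (S ×ˢ (Set.univ : Set ℝ))
  cont_ux : ContinuousOn (fun p : ℝ × ℝ => deriv (u p.1) p.2) (S ×ˢ (Set.univ : Set ℝ))
  cont_uxx : ContinuousOn (fun p : ℝ × ℝ => deriv (deriv (u p.1)) p.2)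
      (S ×ˢ (Set.univ : Set ℝ))
  cont_utx : ContinuousOn (fun p : ℝ × ℝ => deriv (fun y => deriv (fun s => u s y) p.1) p.2)
      (S ×ˢ (Set.univ : Set ℝ))
  eqn : ∀ t ∈ S, 0 < t → ∀ x : ℝ,
    deriv (fun y => deriv (fun s => u s y) t) x
      + (deriv (u t) x) ^ 2 + u t x * deriv (deriv (u t)) x = γ * u t x

/-!
Let `G = u_t + u u_x`, so that the equation reads `G_x = γ u`. Integrating it over a period shows
that `u` has mean zero in `x`, hence so does `u_t`, hence so does `G`; multiplying `G_x = γ u` by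
`G` and integrating shows that the `L²` norm of `u` is conserved. A function of mean zero vanishes
somewhere, so `|G| ≤ |γ| ∫ |u| ≤ |γ| ‖u₀‖_{L²}`. Where `u` is maximal or minimal in space
`u_x = 0` and so `G = u_t`: the extrema of `u` move with speed at most `|γ| ‖u₀‖_{L²}`.
-/

open scoped Topology

section ParametricIntegral

variable {E : Type*} [NormedAddCommGroup E] [NormedSpace ℝ E]

lemma continuousOn_intervalIntegral {X : Type*} [TopologicalSpace X] [FirstCountableTopology X]
    {F : X → ℝ → E} {S : Set X} (hF : ContinuousOn (Function.uncurry F) (S ×ˢ univ)) (a b : ℝ) :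
    ContinuousOn (fun t => ∫ x in a..b, F t x) S := by
  rw [continuousOn_iff_continuous_domRestrict]
  refine continuous_parametric_intervalIntegral_of_continuous' (f := fun t : S => F t) ?_ a b
  exact hF.comp_continuous (continuous_subtype_val.prodMap continuous_id)
    fun p => ⟨p.1.2, mem_univ _⟩

lemma hasDerivAt_intervalIntegral_of_continuousOn {𝕜 : Type*} [RCLike 𝕜] [NormedSpace 𝕜 E]
    {F F' : 𝕜 → ℝ → E} {S : Set 𝕜} {t : 𝕜} {a b : ℝ} (hS : S ∈ 𝓝 t)
    (hF : ∀ r ∈ S, ContinuousOn (F r) (uIcc a b))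
    (hF' : ContinuousOn (Function.uncurry F') (S ×ˢ uIcc a b))
    (hderiv : ∀ r ∈ S, ∀ x ∈ uIcc a b, HasDerivAt (fun q => F q x) (F' r x) r) :
    HasDerivAt (fun r => ∫ x in a..b, F r x) (∫ x in a..b, F' t x) t := by
  obtain ⟨N, hN, hNS, hNc⟩ := local_compact_nhds hS
  obtain ⟨C, hC⟩ := (hNc.prod isCompact_uIcc).exists_bound_of_continuousOn
    (hF'.mono (prod_mono_left hNS))
  have ht : t ∈ S := mem_of_mem_nhds hS
  have aestronglyMeasurable {f : ℝ → E} (hf : ContinuousOn f (uIcc a b)) :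
      AEStronglyMeasurable f (volume.restrict (uIoc a b)) :=
    (hf.mono uIoc_subset_uIcc).aestronglyMeasurable measurableSet_uIoc
  exact (hasDerivAt_integral_of_dominated_loc_of_deriv_le (bound := fun _ => C) hN
    (eventually_of_mem hS fun r hr => aestronglyMeasurable (hF r hr))
    (hF t ht).intervalIntegrable
    (aestronglyMeasurable (hF'.uncurry_left t ht))
    (.of_forall fun x hx r hr => hC (r, x) ⟨hr, uIoc_subset_uIcc hx⟩)
    intervalIntegrable_const
    (.of_forall fun x hx r hr => hderiv r (hNS hr) x (uIoc_subset_uIcc hx))).2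

end ParametricIntegral

section MaximumPrinciple

lemma nonneg_of_hasDerivWithinAt_of_isMaxOn_Icc {f : ℝ → ℝ} {f' a b : ℝ} (hab : a < b)
    (hf : HasDerivWithinAt f f' (Icc a b) b) (hmax : IsMaxOn f (Icc a b) b) : 0 ≤ f' := by
  have hcone : a - b ∈ posTangentConeAt (Icc a b) b :=
    sub_mem_posTangentConeAt_of_segment_subset (by rw [segment_symm, segment_eq_Icc hab.le])
  have hnonpos : (a - b) * f' ≤ 0 := by
    simpa using hmax.localize.hasFDerivWithinAt_nonpos hf.hasFDerivWithinAt hcone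
  exact nonneg_of_mul_nonpos_right hnonpos (sub_neg.2 hab)

variable {X : Type*} [TopologicalSpace X] {s : Set X} {v v' : ℝ → X → ℝ} {a b K M : ℝ}

lemma le_add_mul_of_deriv_lt_of_isMaxOn (hs : IsCompact s)
    (hv : ContinuousOn (Function.uncurry v) (Icc a b ×ˢ s))
    (hv' : ∀ t ∈ Ioc a b, ∀ x ∈ s, HasDerivWithinAt (fun r => v r x) (v' t x) (Icc a b) t)
    (hM : ∀ x ∈ s, v a x ≤ M)
    (hK : ∀ t ∈ Ioc a b, ∀ x ∈ s, IsMaxOn (v t) s x → v' t x < K) :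
    ∀ t ∈ Icc a b, ∀ x ∈ s, v t x ≤ M + K * (t - a) := by
  intro t ht x hx
  have hcont : ContinuousOn (fun p : ℝ × X => v p.1 p.2 - K * (p.1 - a)) (Icc a b ×ˢ s) :=
    hv.sub (by fun_prop)
  obtain ⟨⟨r, y⟩, ⟨hr, hy⟩, hmax⟩ :=
    (isCompact_Icc.prod hs).exists_isMaxOn ⟨(t, x), ht, hx⟩ hcont
  replace hmax : ∀ q ∈ Icc a b, ∀ z ∈ s, v q z - K * (q - a) ≤ v r y - K * (r - a) :=
    fun q hq z hz => hmax (mk_mem_prod hq hz)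
  obtain rfl | har := hr.1.eq_or_lt
  · linarith [hmax t ht x hx, hM y hy]
  · have hlt : v' r y < K :=
      hK r ⟨har, hr.2⟩ y hy fun z hz => (sub_le_sub_iff_right _).1 (hmax r hr z hz)
    have hsub : Icc a r ⊆ Icc a b := Icc_subset_Icc_right hr.2
    have hderiv : HasDerivWithinAt (fun q => v q y - K * (q - a)) (v' r y - K * 1) (Icc a r) r :=
      ((hv' r ⟨har, hr.2⟩ y hy).mono hsub).sub
        (((hasDerivWithinAt_id r _).sub_const a).const_mul K)
    have hnonneg : 0 ≤ v' r y - K * 1 :=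
      nonneg_of_hasDerivWithinAt_of_isMaxOn_Icc har hderiv fun q hq => hmax q (hsub hq) y hy
    linarith

lemma le_add_mul_of_deriv_le_of_isMaxOn (hs : IsCompact s)
    (hv : ContinuousOn (Function.uncurry v) (Icc a b ×ˢ s))
    (hv' : ∀ t ∈ Ioc a b, ∀ x ∈ s, HasDerivWithinAt (fun r => v r x) (v' t x) (Icc a b) t)
    (hM : ∀ x ∈ s, v a x ≤ M)
    (hK : ∀ t ∈ Ioc a b, ∀ x ∈ s, IsMaxOn (v t) s x → v' t x ≤ K) :
    ∀ t ∈ Icc a b, ∀ x ∈ s, v t x ≤ M + K * (t - a) := by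
  intro t ht x hx
  obtain rfl | hat := ht.1.eq_or_lt
  · simpa using hM x hx
  · have hdiv : (v t x - M) / (t - a) ≤ K := by
      refine le_of_forall_gt_imp_ge_of_dense fun K' hK' => ?_
      have hle := le_add_mul_of_deriv_lt_of_isMaxOn hs hv hv' hM
        (fun r hr y hy hmax => (hK r hr y hy hmax).trans_lt hK') t ht x hx
      rw [div_le_iff₀ (sub_pos.2 hat)]
      linarith
    rw [div_le_iff₀ (sub_pos.2 hat)] at hdiv
    linarith

lemma abs_le_add_mul_of_abs_deriv_le_of_isExtrOn (hs : IsCompact s)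
    (hv : ContinuousOn (Function.uncurry v) (Icc a b ×ˢ s))
    (hv' : ∀ t ∈ Ioc a b, ∀ x ∈ s, HasDerivWithinAt (fun r => v r x) (v' t x) (Icc a b) t)
    (hM : ∀ x ∈ s, |v a x| ≤ M)
    (hK : ∀ t ∈ Ioc a b, ∀ x ∈ s, IsExtrOn (v t) s x → |v' t x| ≤ K) :
    ∀ t ∈ Icc a b, ∀ x ∈ s, |v t x| ≤ M + K * (t - a) := by
  intro t ht x hx
  refine abs_le'.2 ⟨?_, ?_⟩
  · exact le_add_mul_of_deriv_le_of_isMaxOn hs hv hv' (fun y hy => (abs_le'.1 (hM y hy)).1)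
      (fun r hr y hy hmax => (abs_le'.1 (hK r hr y hy hmax.isExtr)).1) t ht x hx
  · exact le_add_mul_of_deriv_le_of_isMaxOn (v := fun r y => -v r y) hs hv.neg
      (fun r hr y hy => (hv' r hr y hy).neg) (fun y hy => (abs_le'.1 (hM y hy)).2)
      (fun r hr y hy hmax => (abs_le'.1 (hK r hr y hy
        (IsMinOn.isExtr (by simpa using hmax.neg)))).2) t ht x hx

end MaximumPrinciple

section Periodic

variable {E : Type*} [NormedAddCommGroup E] [NormedSpace ℝ E]

lemma periodic_of_hasDerivAt {f f' : ℝ → E} {p : ℝ} (hf : Function.Periodic f p)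
    (hderiv : ∀ x, HasDerivAt f (f' x) x) : Function.Periodic f' p := by
  intro x
  have hshift : HasDerivAt f (f' (x + p)) x := by
    simpa only [hf.funext] using (hderiv (x + p)).comp_add_const x p
  exact hshift.unique (hderiv x)

lemma integral_eq_zero_of_hasDerivAt_of_periodic [CompleteSpace E] {f f' : ℝ → E} {p : ℝ}
    (hf : Function.Periodic f p) (hderiv : ∀ x, HasDerivAt f (f' x) x)
    (hint : IntervalIntegrable f' volume 0 p) : ∫ x in (0 : ℝ)..p, f' x = 0 := by
  rw [integral_eq_sub_of_hasDerivAt (fun x _ => hderiv x) hint, hf.eq, sub_self]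

lemma deriv_eq_zero_of_periodic_of_isExtrOn_Icc {f : ℝ → ℝ} {a p x : ℝ}
    (hf : Function.Periodic f p) (hp : 0 < p) (hx : IsExtrOn f (Icc a (a + p)) x) :
    deriv f x = 0 := by
  have reduce (y : ℝ) : ∃ z ∈ Icc a (a + p), f y = f z := by
    obtain ⟨z, hz, hyz⟩ := hf.exists_mem_Ico hp y a
    exact ⟨z, Ico_subset_Icc_self hz, hyz⟩
  have hglobal : IsExtrOn f univ x := by
    refine hx.imp (fun hmin y _ => ?_) fun hmax y _ => ?_
    all_goals obtain ⟨z, hz, hyz⟩ := reduce y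
    · exact (hmin hz).trans_eq hyz.symm
    · exact hyz.trans_le (hmax hz)
  exact (hglobal.isLocalExtr univ_mem).deriv_eq_zero

lemma exists_mem_Ioo_eq_zero_of_integral_eq_zero {f : ℝ → ℝ} {a b : ℝ} (hab : a < b)
    (hf : ContinuousOn f (Icc a b)) (hzero : ∫ x in a..b, f x = 0) : ∃ c ∈ Ioo a b, f c = 0 := by
  obtain ⟨c, hc, hfc⟩ := exists_eq_interval_average hab.ne (by rwa [uIcc_of_le hab.le])
  rw [uIoo_of_le hab.le] at hc
  exact ⟨c, hc, by rw [hfc, interval_average_eq_div, hzero, zero_div]⟩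

lemma abs_le_integral_abs_of_hasDerivAt_of_periodic {f f' : ℝ → ℝ} {p : ℝ} (hp : 0 < p)
    (hf : Function.Periodic f p) (hderiv : ∀ x, HasDerivAt f (f' x) x) (hf' : Continuous f')
    (hzero : ∫ x in (0 : ℝ)..p, f x = 0) (y : ℝ) : |f y| ≤ ∫ x in (0 : ℝ)..p, |f' x| := by
  obtain ⟨c, -, hc⟩ := exists_mem_Ioo_eq_zero_of_integral_eq_zero hp
    (fun x _ => (hderiv x).continuousAt.continuousWithinAt) hzero
  obtain ⟨z, hz, hyz⟩ := hf.exists_mem_Ico hp y c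
  have hperiodic : Function.Periodic (fun x => |f' x|) p :=
    (periodic_of_hasDerivAt hf hderiv).comp abs
  calc |f y| = |∫ x in c..z, f' x| := by
        rw [integral_eq_sub_of_hasDerivAt (fun x _ => hderiv x) (hf'.intervalIntegrable _ _),
          hc, sub_zero, hyz]
    _ ≤ ∫ x in c..z, |f' x| := abs_integral_le_integral_abs hz.1
    _ ≤ ∫ x in c..c + p, |f' x| :=
        integral_mono_interval le_rfl hz.1 hz.2.le (.of_forall fun x => abs_nonneg _)
          (hf'.abs.intervalIntegrable _ _)
    _ = ∫ x in (0 : ℝ)..p, |f' x| := by simpa using hperiodic.intervalIntegral_add_eq c 0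

end Periodic

lemma integral_abs_le_sqrt_integral_sq {Ω : Type*} [MeasurableSpace Ω] {μ : Measure Ω}
    [IsProbabilityMeasure μ] {f : Ω → ℝ} (hf : MemLp f 2 μ) :
    ∫ ω, |f ω| ∂μ ≤ √(∫ ω, f ω ^ 2 ∂μ) := by
  have hvar := ProbabilityTheory.variance_nonneg |f| μ
  rw [ProbabilityTheory.variance_eq_sub hf.abs, sub_nonneg] at hvar
  exact Real.le_sqrt_of_sq_le (by simpa using hvar)

lemma intervalIntegral_abs_le_sqrt_intervalIntegral_sq {f : ℝ → ℝ} (hf : Continuous f) :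
    ∫ x in (0 : ℝ)..1, |f x| ≤ √(∫ x in (0 : ℝ)..1, f x ^ 2) := by
  have : IsProbabilityMeasure (volume.restrict (Ioc (0 : ℝ) 1)) := ⟨by simp⟩
  simp only [integral_of_le zero_le_one]
  exact integral_abs_le_sqrt_integral_sq <|
    (memLp_two_iff_integrable_sq hf.aestronglyMeasurable).2 (hf.pow 2).integrableOn_Ioc

/-- The material derivative `u_t + u u_x` of a velocity field `u` on the line, that is, its rate of
change along characteristics. The Ostrovsky–Hunter equation states that its `x`-derivative is
`γ u`. It is built from `deriv`, so it is meaningful only where `u` is differentiable. -/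
noncomputable def materialDeriv (u : ℝ → ℝ → ℝ) (t x : ℝ) : ℝ :=
  deriv (fun s => u s x) t + u t x * deriv (u t) x

namespace IsPeriodicOHSolution

variable {γ T t : ℝ} {S : Set ℝ} {u : ℝ → ℝ → ℝ}

lemma hasDerivAt_time (h : IsPeriodicOHSolution γ S u) (ht : t ∈ S) (x : ℝ) :
    HasDerivAt (fun s => u s x) (deriv (fun s => u s x) t) t :=
  (h.diff_t t ht x).hasDerivAt

lemma hasDerivAt_space (h : IsPeriodicOHSolution γ S u) (ht : t ∈ S) (x : ℝ) :
    HasDerivAt (u t) (deriv (u t) x) x :=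
  (h.diff_x t ht x).hasDerivAt

lemma continuous_space (h : IsPeriodicOHSolution γ S u) (ht : t ∈ S) : Continuous (u t) :=
  continuousOn_univ.1 (h.cont_u.uncurry_left (f := u) t ht)

lemma continuous_deriv_space (h : IsPeriodicOHSolution γ S u) (ht : t ∈ S) :
    Continuous (deriv (u t)) :=
  continuousOn_univ.1 (h.cont_ux.uncurry_left (f := fun r => deriv (u r)) t ht)

lemma continuous_deriv_time (h : IsPeriodicOHSolution γ S u) (ht : t ∈ S) :
    Continuous fun x => deriv (fun s => u s x) t :=
  continuousOn_univ.1 (h.cont_ut.uncurry_left (f := fun r x => deriv (fun s => u s x) r) t ht)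

lemma hasDerivAt_materialDeriv (h : IsPeriodicOHSolution γ S u) (ht : t ∈ S) (hpos : 0 < t)
    (x : ℝ) : HasDerivAt (materialDeriv u t) (γ * u t x) x := by
  refine ((h.diff_tx t ht x).hasDerivAt.add
    ((h.hasDerivAt_space ht x).mul (h.diff_xx t ht x).hasDerivAt)).congr_deriv ?_
  linear_combination h.eqn t ht hpos x

lemma periodic_materialDeriv (h : IsPeriodicOHSolution γ S u) (hS : S ∈ 𝓝 t) :
    Function.Periodic (materialDeriv u t) 1 := by
  intro x
  have ht : t ∈ S := mem_of_mem_nhds hS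
  have htime : deriv (fun s => u s (x + 1)) t = deriv (fun s => u s x) t :=
    EventuallyEq.deriv_eq (eventually_of_mem hS fun s hs => h.periodic s hs x)
  have hspace : deriv (u t) (x + 1) = deriv (u t) x :=
    periodic_of_hasDerivAt (h.periodic t ht) (h.hasDerivAt_space ht) x
  simp only [materialDeriv, htime, hspace, h.periodic t ht x]

lemma integral_eq_zero (h : IsPeriodicOHSolution γ S u) (hγ : γ ≠ 0) (hS : S ∈ 𝓝 t)
    (hpos : 0 < t) : ∫ x in (0 : ℝ)..1, u t x = 0 := by
  have ht : t ∈ S := mem_of_mem_nhds hS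
  have hint : ∫ x in (0 : ℝ)..1, γ * u t x = 0 :=
    integral_eq_zero_of_hasDerivAt_of_periodic (h.periodic_materialDeriv hS)
      (h.hasDerivAt_materialDeriv ht hpos)
      (((h.continuous_space ht).intervalIntegrable _ _).const_mul γ)
  rw [intervalIntegral.integral_const_mul] at hint
  exact (mul_eq_zero.1 hint).resolve_left hγ

lemma integral_deriv_time_eq_zero (h : IsPeriodicOHSolution γ S u) (hγ : γ ≠ 0) (hS : S ∈ 𝓝 t)
    (hpos : 0 < t) : ∫ x in (0 : ℝ)..1, deriv (fun s => u s x) t = 0 := by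
  have hderiv : HasDerivAt (fun s => ∫ x in (0 : ℝ)..1, u s x)
      (∫ x in (0 : ℝ)..1, deriv (fun s => u s x) t) t :=
    hasDerivAt_intervalIntegral_of_continuousOn (F' := fun r x => deriv (fun s => u s x) r) hS
      (fun r hr => (h.continuous_space hr).continuousOn)
      (h.cont_ut.mono (prod_mono_right (subset_univ _))) fun r hr x _ => h.hasDerivAt_time hr x
  refine hderiv.unique ((hasDerivAt_const t (0 : ℝ)).congr_of_eventuallyEq ?_)
  filter_upwards [eventually_mem_nhds_iff.2 hS, lt_mem_nhds hpos] with s hs hs0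
  exact h.integral_eq_zero hγ hs hs0

lemma integral_mul_deriv_space_eq_zero (h : IsPeriodicOHSolution γ S u) (ht : t ∈ S) :
    ∫ x in (0 : ℝ)..1, u t x * deriv (u t) x = 0 := by
  have hperiodic : Function.Periodic (fun x => u t x ^ 2 / 2) 1 :=
    Function.Periodic.comp (h.periodic t ht) fun y => y ^ 2 / 2
  refine integral_eq_zero_of_hasDerivAt_of_periodic hperiodic (fun x => ?_)
    (((h.continuous_space ht).mul (h.continuous_deriv_space ht)).intervalIntegrable _ _)
  refine (((h.hasDerivAt_space ht x).pow 2).div_const 2).congr_deriv ?_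
  push_cast
  ring

lemma integral_materialDeriv_eq_zero (h : IsPeriodicOHSolution γ S u) (hγ : γ ≠ 0) (hS : S ∈ 𝓝 t)
    (hpos : 0 < t) : ∫ x in (0 : ℝ)..1, materialDeriv u t x = 0 := by
  have ht : t ∈ S := mem_of_mem_nhds hS
  have hint : IntervalIntegrable (fun x => u t x * deriv (u t) x) volume 0 1 :=
    ((h.continuous_space ht).mul (h.continuous_deriv_space ht)).intervalIntegrable _ _
  simp only [materialDeriv]
  rw [intervalIntegral.integral_add ((h.continuous_deriv_time ht).intervalIntegrable _ _) hint,
    h.integral_deriv_time_eq_zero hγ hS hpos, h.integral_mul_deriv_space_eq_zero ht, add_zero]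

lemma integral_mul_deriv_time_eq_zero (h : IsPeriodicOHSolution γ S u) (hγ : γ ≠ 0)
    (hS : S ∈ 𝓝 t) (hpos : 0 < t) :
    ∫ x in (0 : ℝ)..1, u t x * deriv (fun s => u s x) t = 0 := by
  have ht : t ∈ S := mem_of_mem_nhds hS
  have hperiodic : Function.Periodic
      (fun x => materialDeriv u t x ^ 2 / 2 - γ * (u t x ^ 3 / 3)) 1 := fun x => by
    simp only [h.periodic_materialDeriv hS x, h.periodic t ht x]
  -- `γ u u_t = G G_x - γ u² u_x` is the `x`-derivative of `G² / 2 - γ u³ / 3`.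
  have hint : ∫ x in (0 : ℝ)..1, γ * (u t x * deriv (fun s => u s x) t) = 0 := by
    refine integral_eq_zero_of_hasDerivAt_of_periodic hperiodic (fun x => ?_)
      ((((h.continuous_space ht).mul (h.continuous_deriv_time ht)).const_mul γ).intervalIntegrable
        _ _)
    refine ((((h.hasDerivAt_materialDeriv ht hpos x).pow 2).div_const 2).sub
      ((((h.hasDerivAt_space ht x).pow 3).div_const 3).const_mul γ)).congr_deriv ?_
    simp only [materialDeriv]
    push_cast
    ring
  rw [intervalIntegral.integral_const_mul] at hint
  exact (mul_eq_zero.1 hint).resolve_left hγ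

lemma hasDerivAt_integral_sq (h : IsPeriodicOHSolution γ S u) (hγ : γ ≠ 0) (hS : S ∈ 𝓝 t)
    (hpos : 0 < t) : HasDerivAt (fun s => ∫ x in (0 : ℝ)..1, u s x ^ 2) 0 t := by
  have hderiv : HasDerivAt (fun s => ∫ x in (0 : ℝ)..1, u s x ^ 2)
      (∫ x in (0 : ℝ)..1, 2 * (u t x * deriv (fun s => u s x) t)) t :=
    hasDerivAt_intervalIntegral_of_continuousOn
      (F' := fun r x => 2 * (u r x * deriv (fun s => u s x) r)) hS
      (fun r hr => ((h.continuous_space hr).pow 2).continuousOn)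
      ((continuousOn_const.mul (h.cont_u.mul h.cont_ut)).mono (prod_mono_right (subset_univ _)))
      fun r hr x _ => ((h.hasDerivAt_time hr x).pow 2).congr_deriv (by push_cast; ring)
  rwa [intervalIntegral.integral_const_mul, h.integral_mul_deriv_time_eq_zero hγ hS hpos,
    mul_zero] at hderiv

lemma integral_sq_eq_integral_sq_zero (h : IsPeriodicOHSolution γ (Ico 0 T) u) (hγ : γ ≠ 0)
    (ht : t ∈ Ico 0 T) : ∫ x in (0 : ℝ)..1, u t x ^ 2 = ∫ x in (0 : ℝ)..1, u 0 x ^ 2 := by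
  obtain rfl | hpos := ht.1.eq_or_lt
  · rfl
  · have hcont : ContinuousOn (fun s => ∫ x in (0 : ℝ)..1, u s x ^ 2) (Icc 0 t) :=
      (continuousOn_intervalIntegral (F := fun s x => u s x ^ 2) (h.cont_u.fun_pow 2) 0 1).mono
        (Icc_subset_Ico_right ht.2)
    obtain ⟨c, -, hc⟩ := exists_hasDerivAt_eq_slope _ (fun _ => 0) hpos hcont fun s hs =>
      h.hasDerivAt_integral_sq hγ (Ico_mem_nhds hs.1 (hs.2.trans ht.2)) hs.1
    exact sub_eq_zero.1 ((div_eq_zero_iff.1 hc.symm).resolve_right (sub_pos.2 hpos).ne')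

lemma abs_materialDeriv_le (h : IsPeriodicOHSolution γ S u) (hγ : γ ≠ 0) (hS : S ∈ 𝓝 t)
    (hpos : 0 < t) (x : ℝ) :
    |materialDeriv u t x| ≤ |γ| * √(∫ y in (0 : ℝ)..1, u t y ^ 2) := by
  have ht : t ∈ S := mem_of_mem_nhds hS
  have hcont : Continuous (u t) := h.continuous_space ht
  calc |materialDeriv u t x| ≤ ∫ y in (0 : ℝ)..1, |γ * u t y| :=
        abs_le_integral_abs_of_hasDerivAt_of_periodic one_pos (h.periodic_materialDeriv hS)
          (h.hasDerivAt_materialDeriv ht hpos) (hcont.const_mul γ)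
          (h.integral_materialDeriv_eq_zero hγ hS hpos) x
    _ = |γ| * ∫ y in (0 : ℝ)..1, |u t y| := by
        simp only [abs_mul, intervalIntegral.integral_const_mul]
    _ ≤ |γ| * √(∫ y in (0 : ℝ)..1, u t y ^ 2) := by
        gcongr
        exact intervalIntegral_abs_le_sqrt_intervalIntegral_sq hcont

lemma abs_le_iSup_abs (h : IsPeriodicOHSolution γ S u) (ht : t ∈ S) (x : ℝ) :
    |u t x| ≤ ⨆ y, |u t y| :=
  le_ciSup (f := fun y => |u t y|)
    ((Function.Periodic.comp (h.periodic t ht) abs).isBounded_of_continuous one_ne_zero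
      (h.continuous_space ht).abs).bddAbove x

end IsPeriodicOHSolution

theorem sup_bound_periodic_general {γ T : ℝ} (hγ : γ ≠ 0) {u : ℝ → ℝ → ℝ}
    (hsol : IsPeriodicOHSolution γ (Ico 0 T) u) :
    ∀ t ∈ Ico 0 T, ∀ s ∈ Icc 0 t, ∀ x,
      |u s x| ≤ (⨆ y, |u 0 y|) + |γ| * t * √(∫ y in (0 : ℝ)..1, u 0 y ^ 2) := by
  intro t ht s hs x
  have hsub : Icc 0 t ⊆ Ico 0 T := Icc_subset_Ico_right ht.2
  have hspeed : ∀ r ∈ Ioc 0 t, ∀ y, IsExtrOn (u r) (Icc x (x + 1)) y →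
      |deriv (fun q => u q y) r| ≤ |γ| * √(∫ z in (0 : ℝ)..1, u 0 z ^ 2) := by
    intro r hr y hextr
    have hrT : r ∈ Ico 0 T := hsub (Ioc_subset_Icc_self hr)
    have hG := hsol.abs_materialDeriv_le hγ (Ico_mem_nhds hr.1 hrT.2) hr.1 y
    rwa [materialDeriv, deriv_eq_zero_of_periodic_of_isExtrOn_Icc (hsol.periodic r hrT) one_pos
      hextr, mul_zero, add_zero, hsol.integral_sq_eq_integral_sq_zero hγ hrT] at hG
  have hbound := abs_le_add_mul_of_abs_deriv_le_of_isExtrOn isCompact_Icc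
    (hsol.cont_u.mono (prod_mono hsub (subset_univ _)))
    (fun r hr y _ => (hsol.hasDerivAt_time (hsub (Ioc_subset_Icc_self hr)) y).hasDerivWithinAt)
    (fun y _ => hsol.abs_le_iSup_abs (hsub (left_mem_Icc.2 ht.1)) y)
    (fun r hr y _ => hspeed r hr y) s hs x (left_mem_Icc.2 (by simp))
  refine hbound.trans ?_
  rw [sub_zero, mul_right_comm]
  gcongr
  exact hs.2

/-- `sup_{s∈[0,t]} sup_x |u(s,x)| ≤ ‖u₀‖_{L∞} + γ t ‖u₀‖_{L²}`. -/
theorem sup_bound_periodic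
    (γ T : ℝ) (hγ : 0 < γ) (u₀ : ℝ → ℝ) (u : ℝ → ℝ → ℝ)
    (hsol : IsPeriodicOHSolution γ (Set.Ico 0 T) u) (h0 : u 0 = u₀)
    (hmean : (∫ x in (0:ℝ)..1, u₀ x) = 0) :
    ∀ t ∈ Set.Ico (0 : ℝ) T, ∀ s ∈ Set.Icc (0 : ℝ) t, ∀ x : ℝ,
      |u s x| ≤ (⨆ y : ℝ, |u₀ y|) + γ * t * Real.sqrt (∫ x in (0:ℝ)..1, (u₀ x) ^ 2) := by
  subst h0
  simpa only [abs_of_pos hγ] using sup_bound_periodic_general hγ.ne' hsol
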